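/- arXiv:2503.10251 — 3 statements merged into one kernel-verified Lean document; each statement's English description precedes it below -/
import Mathlib

section
/- Let d ≥ 2 and W_q, W_k, W_v ∈ ℝ^{d×d} with W_kᵀW_q non-singular. Let X ∈ ℝ^{d×n} be such that A(X) has all entries nonzero. Then there exists 0 < β* ≤ 1 such that for each fixed 0 ≤ β < β* and every X̂ ∈ ℝ^{d×n} with ρ_c(X̂, X) ≤ β/κ_{c,c}(A, X), and for all sufficiently small u: ρ_c( fl(A(X̂)), A(X) ) ≤ ξ(A, X) · ( 1 + (4/√d) σ_max(|W_k|ᵀ|W_q|) · (σ_max(W_kᵀW_q)/σ_min(W_kᵀW_q)) · max_{1≤t≤n}‖x_t‖₂² ) · ( (2n + 3d) u + ρ_c(X̂, X) ) + C·(u² + ρ_c(X̂, X)²) for a constant C independent of u and X̂, where ξ(A, X) = max_{i,t} (|e_iᵀW_v||X_t|ψ(S(X_t)))/|e_iᵀW_v X_t ψ(S(X_t))| ≥ 1 and x_t denotes the t-th column of X. -/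
open scoped BigOperators ENNReal

noncomputable section

namespace TR

/-! ### Norms and basic quantities -/

/-- Euclidean (ℓ₂) norm of a vector. -/
def l2 {d : ℕ} (x : Fin d → ℝ) : ℝ := Real.sqrt (∑ i, x i ^ 2)

/-- ℓ_∞ norm of a vector. -/
def linf {d : ℕ} (x : Fin d → ℝ) : ℝ := ⨆ i, |x i|

/-- "ℓ_{−∞}" functional: the minimal absolute value of the entries. -/
def lminf {d : ℕ} (x : Fin d → ℝ) : ℝ := ⨅ i, |x i|

/-- ℓ₁ norm of a vector. -/
def l1 {d : ℕ} (x : Fin d → ℝ) : ℝ := ∑ i, |x i|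

/-- γ_k = k u / (1 − k u). -/
def gam (k : ℕ) (u : ℝ) : ℝ := (k : ℝ) * u / (1 - (k : ℝ) * u)

/-- entrywise absolute value of a matrix. -/
def matAbs {a b : ℕ} (B : Matrix (Fin a) (Fin b) ℝ) : Matrix (Fin a) (Fin b) ℝ :=
  Matrix.of fun i j => |B i j|

/-- largest singular value: supremum of ‖Bx‖₂ over ℓ₂-unit vectors. -/
def sigmaMax {d : ℕ} (B : Matrix (Fin d) (Fin d) ℝ) : ℝ :=
  ⨆ x : {x : Fin d → ℝ // l2 x = 1}, l2 (fun i => ∑ j, B i j * x.1 j)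

/-- smallest singular value: infimum of ‖Bx‖₂ over ℓ₂-unit vectors. -/
def sigmaMin {d : ℕ} (B : Matrix (Fin d) (Fin d) ℝ) : ℝ :=
  ⨅ x : {x : Fin d → ℝ // l2 x = 1}, l2 (fun i => ∑ j, B i j * x.1 j)

/-- matrix (1,∞) operator norm: max of absolute values of entries. -/
def norm1inf {a b : ℕ} (B : Matrix (Fin a) (Fin b) ℝ) : ℝ := ⨆ p : Fin a × Fin b, |B p.1 p.2|

/-- matrix (∞,∞) operator norm: max row ℓ₁ norm. -/
def norminfinf {a b : ℕ} (B : Matrix (Fin a) (Fin b) ℝ) : ℝ := ⨆ i, ∑ j, |B i j|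

/-- matrix (1,1) operator norm: max column ℓ₁ norm. -/
def norm11 {a b : ℕ} (B : Matrix (Fin a) (Fin b) ℝ) : ℝ := ⨆ j, ∑ i, |B i j|

/-! ### Componentwise relative distance -/

/-- Componentwise relative distance between vectors, with the conventions
`t/0 = ∞` for `t ≠ 0` and `0/0 = 0`. -/
def rhoV {d : ℕ} (xh x : Fin d → ℝ) : ℝ≥0∞ :=
  ⨆ i, (if x i = 0 then (if xh i = 0 then (0 : ℝ≥0∞) else ⊤)
        else ENNReal.ofReal (|xh i - x i| / |x i|))

/-- Componentwise relative distance between matrices given by their columns. -/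
def rhoM {d n : ℕ} (Xh X : Fin n → Fin d → ℝ) : ℝ≥0∞ := ⨆ t, rhoV (Xh t) (X t)

/-! ### Exact transformer components -/

/-- RMS layer normalization `R(x) = √d · x / ‖x‖₂`. -/
def rmsN {d : ℕ} (x : Fin d → ℝ) : Fin d → ℝ := fun i => Real.sqrt d * x i / l2 x

/-- sample mean. -/
def meanv {d : ℕ} (x : Fin d → ℝ) : ℝ := (∑ i, x i) / d

/-- centring `c̊(x) = x − μ(x) e`. -/
def centr {d : ℕ} (x : Fin d → ℝ) : Fin d → ℝ := fun i => x i - meanv x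

/-- layer normalization `N(x) = √d · c̊(x)/‖c̊(x)‖₂ = (x − μ(x)e)/√ν(x)`. -/
def layerN {d : ℕ} (x : Fin d → ℝ) : Fin d → ℝ := rmsN (centr x)

/-- softmax. -/
def softmax {m : ℕ} (s : Fin m → ℝ) : Fin m → ℝ :=
  fun i => Real.exp (s i) / ∑ j, Real.exp (s j)

/-- affine map `x ↦ A x + b`. -/
def affine {k m : ℕ} (A : Matrix (Fin k) (Fin m) ℝ) (b : Fin k → ℝ) (x : Fin m → ℝ) :
    Fin k → ℝ :=
  fun i => (∑ j, A i j * x j) + b i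

/-- two-layer perceptron `M = L₂ ∘ ReLU ∘ L₁`. -/
def tlp {d D : ℕ} (A1 : Matrix (Fin D) (Fin d) ℝ) (b1 : Fin D → ℝ)
    (A2 : Matrix (Fin d) (Fin D) ℝ) (b2 : Fin d → ℝ) (x : Fin d → ℝ) : Fin d → ℝ :=
  affine A2 b2 (fun i => max 0 (affine A1 b1 x i))

/-- the matrix of the first `t+1` columns of `X` (columns are `X 0, …, X t`). -/
def prefixCols {d n : ℕ} (X : Fin n → Fin d → ℝ) (t : Fin n) : Fin (t.1 + 1) → Fin d → ℝ :=
  fun i => X (Fin.castLE t.isLt i)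

/-- similarity scores `S(Z) = (1/√d) (W_k Z)ᵀ (W_q z_last)`. -/
def simScores {d m : ℕ} (Wq Wk : Matrix (Fin d) (Fin d) ℝ)
    (Z : Fin (m + 1) → Fin d → ℝ) : Fin (m + 1) → ℝ :=
  fun i => (1 / Real.sqrt d) * ∑ a, (∑ b, Wk a b * Z i b) * (∑ b, Wq a b * Z (Fin.last m) b)

/-- masked single-head self-attention: the `t`-th column of `A(X)` is
`W_v X_t ψ(S(X_t))`. -/
def attn {d n : ℕ} (Wq Wk Wv : Matrix (Fin d) (Fin d) ℝ) (X : Fin n → Fin d → ℝ) :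
    Fin n → Fin d → ℝ :=
  fun t i => ∑ a, Wv i a * ∑ j : Fin (t.1 + 1),
    softmax (simScores Wq Wk (prefixCols X t)) j * prefixCols X t j a

/-- transformer configuration. -/
structure Config (d D : ℕ) where
  A1 : Matrix (Fin D) (Fin d) ℝ
  b1 : Fin D → ℝ
  A2 : Matrix (Fin d) (Fin D) ℝ
  b2 : Fin d → ℝ
  Wq : Matrix (Fin d) (Fin d) ℝ
  Wk : Matrix (Fin d) (Fin d) ℝ
  Wv : Matrix (Fin d) (Fin d) ℝ

/-- transformer block with RMS layer normalization
`Q_Θ = (Id + M* ∘ R*) ∘ (Id + A ∘ R*)`. -/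
def Qblock {d D n : ℕ} (c : Config d D) (X : Fin n → Fin d → ℝ) : Fin n → Fin d → ℝ :=
  let Y : Fin n → Fin d → ℝ :=
    fun t i => X t i + attn c.Wq c.Wk c.Wv (fun s => rmsN (X s)) t i
  fun t i => Y t i + tlp c.A1 c.b1 c.A2 c.b2 (rmsN (Y t)) i

/-- transformer block with layer normalization
`T_Θ = (Id + M* ∘ N*) ∘ (Id + A ∘ N*)`. -/
def Tblock {d D n : ℕ} (c : Config d D) (X : Fin n → Fin d → ℝ) : Fin n → Fin d → ℝ :=
  let Y : Fin n → Fin d → ℝ :=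
    fun t i => X t i + attn c.Wq c.Wk c.Wv (fun s => layerN (X s)) t i
  fun t i => Y t i + tlp c.A1 c.b1 c.A2 c.b2 (layerN (Y t)) i

/-! ### Floating-point model -/

/-- `a` is the rounded value of `b`: `a = b (1+δ)`, `|δ| ≤ u`. -/
def Fp (u a b : ℝ) : Prop := ∃ δ : ℝ, |δ| ≤ u ∧ a = b * (1 + δ)

/-- recursive summation of a list in floating-point arithmetic. -/
inductive FlSumL (u : ℝ) : List ℝ → ℝ → Prop
  | nil : FlSumL u [] 0
  | single (x : ℝ) : FlSumL u [x] x
  | cons (x y : ℝ) (l : List ℝ) (s r : ℝ) :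
      FlSumL u (y :: l) s → Fp u r (x + s) → FlSumL u (x :: y :: l) r

/-- recursive summation of the values of a finite family. -/
def FlSum (u : ℝ) {m : ℕ} (f : Fin m → ℝ) (r : ℝ) : Prop := FlSumL u (List.ofFn f) r

/-- floating-point inner product: rounded products, recursive summation. -/
def FlDot (u : ℝ) {m : ℕ} (x y : Fin m → ℝ) (r : ℝ) : Prop :=
  ∃ p : Fin m → ℝ, (∀ i, Fp u (p i) (x i * y i)) ∧ FlSum u p r

/-- floating-point matrix-vector product. -/
def FlMulVec (u : ℝ) {k m : ℕ} (A : Matrix (Fin k) (Fin m) ℝ) (x : Fin m → ℝ)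
    (r : Fin k → ℝ) : Prop :=
  ∀ i, FlDot u (A i) x (r i)

/-- floating-point evaluation of `x ↦ Ax + b`. -/
def FlAffine (u : ℝ) {k m : ℕ} (A : Matrix (Fin k) (Fin m) ℝ) (b : Fin k → ℝ)
    (x : Fin m → ℝ) (r : Fin k → ℝ) : Prop :=
  ∃ w : Fin k → ℝ, FlMulVec u A x w ∧ ∀ i, Fp u (r i) (w i + b i)

/-- floating-point evaluation of the two-layer perceptron (ReLU is exact). -/
def FlTLP (u : ℝ) {d D : ℕ} (A1 : Matrix (Fin D) (Fin d) ℝ) (b1 : Fin D → ℝ)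
    (A2 : Matrix (Fin d) (Fin D) ℝ) (b2 : Fin d → ℝ) (x : Fin d → ℝ) (r : Fin d → ℝ) : Prop :=
  ∃ w : Fin D → ℝ, FlAffine u A1 b1 x w ∧ FlAffine u A2 b2 (fun i => max 0 (w i)) r

/-- floating-point evaluation of the Euclidean norm: squares, recursive
summation, square root. -/
def FlL2 (u : ℝ) {m : ℕ} (x : Fin m → ℝ) (r : ℝ) : Prop :=
  ∃ sq : Fin m → ℝ, (∀ i, Fp u (sq i) (x i * x i)) ∧
    ∃ s : ℝ, FlSum u sq s ∧ Fp u r (Real.sqrt s)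

/-- floating-point evaluation of the RMS layer normalization. -/
def FlRMS (u : ℝ) {d : ℕ} (x : Fin d → ℝ) (r : Fin d → ℝ) : Prop :=
  ∃ nrm : ℝ, FlL2 u x nrm ∧
    ∀ i, ∃ t : ℝ, Fp u t (Real.sqrt d * x i) ∧ Fp u (r i) (t / nrm)

/-- floating-point evaluation of the centring. -/
def FlCentr (u : ℝ) {d : ℕ} (x : Fin d → ℝ) (r : Fin d → ℝ) : Prop :=
  ∃ s m : ℝ, FlSum u x s ∧ Fp u m (s / (d : ℝ)) ∧ ∀ i, Fp u (r i) (x i - m)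

/-- floating-point evaluation of the layer normalization: centring followed by
RMS normalization of the centred vector. -/
def FlLN (u : ℝ) {d : ℕ} (x : Fin d → ℝ) (r : Fin d → ℝ) : Prop :=
  ∃ c : Fin d → ℝ, FlCentr u x c ∧ FlRMS u c r

/-- floating-point evaluation of the softmax. -/
def FlSoftmax (u : ℝ) {m : ℕ} (s : Fin m → ℝ) (r : Fin m → ℝ) : Prop :=
  ∃ ex : Fin m → ℝ, (∀ i, Fp u (ex i) (Real.exp (s i))) ∧
    ∃ tot : ℝ, FlSum u ex tot ∧ ∀ i, Fp u (r i) (ex i / tot)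

/-- floating-point evaluation of the similarity scores. -/
def FlSim (u : ℝ) {d m : ℕ} (Wq Wk : Matrix (Fin d) (Fin d) ℝ)
    (Z : Fin (m + 1) → Fin d → ℝ) (r : Fin (m + 1) → ℝ) : Prop :=
  ∃ q : Fin d → ℝ, FlMulVec u Wq (Z (Fin.last m)) q ∧
    ∀ i, ∃ kv : Fin d → ℝ, ∃ dp : ℝ, FlMulVec u Wk (Z i) kv ∧ FlDot u q kv dp ∧
      Fp u (r i) (dp / Real.sqrt d)

/-- floating-point evaluation of the self-attention. -/
def FlAttn (u : ℝ) {d n : ℕ} (Wq Wk Wv : Matrix (Fin d) (Fin d) ℝ)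
    (X : Fin n → Fin d → ℝ) (r : Fin n → Fin d → ℝ) : Prop :=
  ∀ t : Fin n, ∃ s psi : Fin (t.1 + 1) → ℝ, ∃ z : Fin d → ℝ,
    FlSim u Wq Wk (prefixCols X t) s ∧ FlSoftmax u s psi ∧
    (∀ a : Fin d, FlDot u (fun j => prefixCols X t j a) psi (z a)) ∧
    FlMulVec u Wv z (r t)

/-- floating-point evaluation of `X ↦ X + A(R*(X))`. -/
def FlResAttnRMS (u : ℝ) {d n : ℕ} (Wq Wk Wv : Matrix (Fin d) (Fin d) ℝ)
    (X r : Fin n → Fin d → ℝ) : Prop :=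
  ∃ RX G : Fin n → Fin d → ℝ, (∀ t, FlRMS u (X t) (RX t)) ∧ FlAttn u Wq Wk Wv RX G ∧
    ∀ t i, Fp u (r t i) (X t i + G t i)

/-- floating-point evaluation of `X ↦ X + A(N*(X))`. -/
def FlResAttnLN (u : ℝ) {d n : ℕ} (Wq Wk Wv : Matrix (Fin d) (Fin d) ℝ)
    (X r : Fin n → Fin d → ℝ) : Prop :=
  ∃ NX G : Fin n → Fin d → ℝ, (∀ t, FlLN u (X t) (NX t)) ∧ FlAttn u Wq Wk Wv NX G ∧
    ∀ t i, Fp u (r t i) (X t i + G t i)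

/-- floating-point evaluation of `x ↦ x + M(R(x))`. -/
def FlResTlpRMS (u : ℝ) {d D : ℕ} (A1 : Matrix (Fin D) (Fin d) ℝ) (b1 : Fin D → ℝ)
    (A2 : Matrix (Fin d) (Fin D) ℝ) (b2 : Fin d → ℝ) (x r : Fin d → ℝ) : Prop :=
  ∃ rx m : Fin d → ℝ, FlRMS u x rx ∧ FlTLP u A1 b1 A2 b2 rx m ∧
    ∀ i, Fp u (r i) (x i + m i)

/-- floating-point evaluation of `x ↦ x + M(N(x))`. -/
def FlResTlpLN (u : ℝ) {d D : ℕ} (A1 : Matrix (Fin D) (Fin d) ℝ) (b1 : Fin D → ℝ)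
    (A2 : Matrix (Fin d) (Fin D) ℝ) (b2 : Fin d → ℝ) (x r : Fin d → ℝ) : Prop :=
  ∃ nx m : Fin d → ℝ, FlLN u x nx ∧ FlTLP u A1 b1 A2 b2 nx m ∧
    ∀ i, Fp u (r i) (x i + m i)

/-- floating-point evaluation of the transformer block with RMS normalization. -/
def FlQBlock (u : ℝ) {d D n : ℕ} (c : Config d D) (X R : Fin n → Fin d → ℝ) : Prop :=
  ∃ RX G Y RY M : Fin n → Fin d → ℝ,
    (∀ t, FlRMS u (X t) (RX t)) ∧
    FlAttn u c.Wq c.Wk c.Wv RX G ∧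
    (∀ t i, Fp u (Y t i) (X t i + G t i)) ∧
    (∀ t, FlRMS u (Y t) (RY t)) ∧
    (∀ t, FlTLP u c.A1 c.b1 c.A2 c.b2 (RY t) (M t)) ∧
    (∀ t i, Fp u (R t i) (Y t i + M t i))

/-- floating-point evaluation of the transformer block with layer
normalization. -/
def FlTBlock (u : ℝ) {d D n : ℕ} (c : Config d D) (X R : Fin n → Fin d → ℝ) : Prop :=
  ∃ NX G Y NY M : Fin n → Fin d → ℝ,
    (∀ t, FlLN u (X t) (NX t)) ∧
    FlAttn u c.Wq c.Wk c.Wv NX G ∧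
    (∀ t i, Fp u (Y t i) (X t i + G t i)) ∧
    (∀ t, FlLN u (Y t) (NY t)) ∧
    (∀ t, FlTLP u c.A1 c.b1 c.A2 c.b2 (NY t) (M t)) ∧
    (∀ t i, Fp u (R t i) (Y t i + M t i))

/-- floating-point evaluation of a deep transformer with RMS normalization. -/
def FlQDeep (u : ℝ) {d D n L : ℕ} (cfg : Fin L → Config d D)
    (X R : Fin n → Fin d → ℝ) : Prop :=
  ∃ Z : Fin (L + 1) → Fin n → Fin d → ℝ, Z 0 = X ∧ Z (Fin.last L) = R ∧
    ∀ l : Fin L, FlQBlock u (cfg l) (Z l.castSucc) (Z l.succ)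

/-- floating-point evaluation of a deep transformer with layer normalization. -/
def FlTDeep (u : ℝ) {d D n L : ℕ} (cfg : Fin L → Config d D)
    (X R : Fin n → Fin d → ℝ) : Prop :=
  ∃ Z : Fin (L + 1) → Fin n → Fin d → ℝ, Z 0 = X ∧ Z (Fin.last L) = R ∧
    ∀ l : Fin L, FlTBlock u (cfg l) (Z l.castSucc) (Z l.succ)

/-! ### Condition numbers and amplification factors -/

/-- componentwise condition number of a vector-valued map. -/
def kccV {d k : ℕ} (f : (Fin d → ℝ) → (Fin k → ℝ)) (x : Fin d → ℝ) : ℝ :=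
  ⨆ i, (∑ j, |fderiv ℝ f x (Pi.single j 1) i * x j|) / |f x i|

/-- componentwise condition number of a matrix-valued map (matrices given by
their columns). -/
def kccM {d n : ℕ} (f : (Fin n → Fin d → ℝ) → (Fin n → Fin d → ℝ))
    (X : Fin n → Fin d → ℝ) : ℝ :=
  ⨆ p : Fin n × Fin d, (∑ q : Fin n × Fin d,
      |fderiv ℝ f X (Pi.single q.1 (Pi.single q.2 1)) p.1 p.2 * X q.1 q.2|) / |f X p.1 p.2|

/-- cancellation factor of a residual connection, vector version. -/
def xiResV {d : ℕ} (x g : Fin d → ℝ) : ℝ := ⨆ i, (|x i| + |g i|) / |x i + g i|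

/-- cancellation factor of a residual connection, matrix version. -/
def xiRes {d n : ℕ} (X G : Fin n → Fin d → ℝ) : ℝ :=
  ⨆ p : Fin n × Fin d, (|X p.1 p.2| + |G p.1 p.2|) / |X p.1 p.2 + G p.1 p.2|

/-- positive support `Ω = supp₊(L₁(z))`. -/
def posSupp {d D : ℕ} (A1 : Matrix (Fin D) (Fin d) ℝ) (b1 : Fin D → ℝ)
    (z : Fin d → ℝ) : Finset (Fin D) :=
  Finset.univ.filter fun k => 0 < affine A1 b1 z k

/-- amplification factor ξ(M, z) of the two-layer perceptron. -/
def xiM {d D : ℕ} (A1 : Matrix (Fin D) (Fin d) ℝ) (b1 : Fin D → ℝ)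
    (A2 : Matrix (Fin d) (Fin D) ℝ) (b2 : Fin d → ℝ) (z : Fin d → ℝ) : ℝ :=
  ⨆ i : Fin d, ((∑ k ∈ posSupp A1 b1 z, |A2 i k| * ((∑ j, |A1 k j| * |z j|) + |b1 k|)) + |b2 i|) /
    |tlp A1 b1 A2 b2 z i|

/-- amplification factor ξ(S, Z) of the similarity scores. -/
def xiSim {d m : ℕ} (Wq Wk : Matrix (Fin d) (Fin d) ℝ)
    (Z : Fin (m + 1) → Fin d → ℝ) : ℝ :=
  ⨆ i, ((1 / Real.sqrt d) *
      ∑ a, (∑ b, |Wk a b| * |Z i b|) * (∑ b, |Wq a b| * |Z (Fin.last m) b|)) /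
    |simScores Wq Wk Z i|

/-- amplification factor ξ(A, Z) of the self-attention. -/
def xiAttn {d n : ℕ} (Wq Wk Wv : Matrix (Fin d) (Fin d) ℝ) (Z : Fin n → Fin d → ℝ) : ℝ :=
  ⨆ p : Fin d × Fin n,
    (∑ j : Fin (p.2.1 + 1), (∑ a, |Wv p.1 a| * |prefixCols Z p.2 j a|) *
        softmax (simScores Wq Wk (prefixCols Z p.2)) j) /
    |∑ j : Fin (p.2.1 + 1), (∑ a, Wv p.1 a * prefixCols Z p.2 j a) *
        softmax (simScores Wq Wk (prefixCols Z p.2)) j|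

/-!
Errors are measured on a logarithmic scale: a multiplicative error of size `c` is a factor in
`[exp (-c), exp c]`, and a rounding error is such a factor with `c = -log (1 - u)`. On this scale
products and quotients add sizes, and positive sums preserve them, so the computation of a column
`W_v X_t ψ(S(X_t))` can be followed operation by operation. Only the softmax leaves the scale: an
additive error `D` in the scores is a multiplicative error of size `2 D` in the weights, and `D` is
at most `(exp c - 1) (1/√d) σ_max(|W_k|ᵀ|W_q|) max_t ‖x_t‖₂²` by Cauchy–Schwarz, where `c` is the
logarithmic error of the scores. The resulting bound is an analytic
function of `(u, ρ)` vanishing at the origin; its derivative there gives the first-order term of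
the theorem, and Taylor's formula puts the rest into `C (u² + ρ²)`.
-/

/-! ### Multiplicative errors on the logarithmic scale -/

/-- `f` is a multiplicative error of logarithmic size at most `c`; that is, `f > 0` and
`|log f| ≤ c`. -/
def IsRelFactor (c f : ℝ) : Prop := f ∈ Set.Icc (Real.exp (-c)) (Real.exp c)

/-- The logarithmic size `-log (1 - u)` of a relative error `u < 1`. -/
def logErr (u : ℝ) : ℝ := -Real.log (1 - u)

theorem logErr_nonneg {u : ℝ} (hu₀ : 0 ≤ u) (hu : u ≤ 1) : 0 ≤ logErr u :=
  neg_nonneg.2 (Real.log_nonpos (by linarith) (by linarith))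

theorem isRelFactor_logErr {u f : ℝ} (hu : u < 1) (hf : |f - 1| ≤ u) :
    IsRelFactor (logErr u) f := by
  have h1u : 0 < 1 - u := by linarith
  obtain ⟨hl, hr⟩ := abs_le.1 hf
  constructor
  · rw [logErr, neg_neg, Real.exp_log h1u]
    linarith
  · rw [logErr, Real.exp_neg, Real.exp_log h1u, ← one_div, le_div_iff₀ h1u]
    nlinarith [sq_nonneg u]

theorem isRelFactor_exp {c x : ℝ} (hx : |x| ≤ c) : IsRelFactor c (Real.exp x) :=
  ⟨Real.exp_le_exp.2 (abs_le.1 hx).1, Real.exp_le_exp.2 (abs_le.1 hx).2⟩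

theorem isRelFactor_one {c : ℝ} (hc : 0 ≤ c) : IsRelFactor c 1 := by
  simpa using isRelFactor_exp (x := 0) (by simpa using hc)

namespace IsRelFactor

variable {c e f g : ℝ}

theorem pos (hf : IsRelFactor c f) : 0 < f := (Real.exp_pos _).trans_le hf.1

theorem mono (hf : IsRelFactor c f) (hce : c ≤ e) : IsRelFactor e f :=
  ⟨(Real.exp_le_exp.2 (neg_le_neg hce)).trans hf.1, hf.2.trans (Real.exp_le_exp.2 hce)⟩

theorem mul (hf : IsRelFactor c f) (hg : IsRelFactor e g) : IsRelFactor (c + e) (f * g) := by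
  constructor
  · rw [neg_add, Real.exp_add]
    exact mul_le_mul hf.1 hg.1 (Real.exp_pos _).le hf.pos.le
  · rw [Real.exp_add]
    exact mul_le_mul hf.2 hg.2 hg.pos.le (Real.exp_pos _).le

theorem inv (hf : IsRelFactor c f) : IsRelFactor c f⁻¹ := by
  constructor
  · rw [Real.exp_neg]
    exact inv_anti₀ hf.pos hf.2
  · rw [← inv_inv (Real.exp c), ← Real.exp_neg]
    exact inv_anti₀ (Real.exp_pos _) hf.1

theorem abs_sub_one_le (hf : IsRelFactor c f) : |f - 1| ≤ Real.exp c - 1 := by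
  have two_le : 2 ≤ Real.exp c + Real.exp (-c) := by
    have := Real.one_le_cosh c
    rw [Real.cosh_eq] at this
    linarith
  exact abs_le.2 ⟨by linarith [hf.1], by linarith [hf.2]⟩

theorem centerMass {ι : Type*} {s : Finset ι} {w f : ι → ℝ} (hw : ∀ i ∈ s, 0 ≤ w i)
    (hs : 0 < ∑ i ∈ s, w i) (hf : ∀ i ∈ s, IsRelFactor c (f i)) :
    IsRelFactor c (s.centerMass w f) :=
  (convex_Icc _ _).centerMass_mem hw hs hf

end IsRelFactor

/-! ### Backward error of floating-point sums and inner products -/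

theorem Fp.exists_isRelFactor {u a b : ℝ} (hu : u < 1) (h : Fp u a b) :
    ∃ f, IsRelFactor (logErr u) f ∧ a = b * f := by
  obtain ⟨δ, hδ, rfl⟩ := h
  exact ⟨1 + δ, isRelFactor_logErr hu (by simpa using hδ), rfl⟩

theorem FlSum.exists_isRelFactor {u : ℝ} (hu₀ : 0 ≤ u) (hu : u < 1) {m : ℕ} {p : Fin m → ℝ}
    {r : ℝ} (h : FlSum u p r) :
    ∃ f : Fin m → ℝ, (∀ i, IsRelFactor ((m - 1) * logErr u) (f i)) ∧ r = ∑ i, p i * f i := by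
  have hL := logErr_nonneg hu₀ hu.le
  induction m generalizing r with
  | zero =>
    rw [FlSum, List.ofFn_zero] at h
    cases h
    exact ⟨fun _ => 1, fun i => i.elim0, by simp⟩
  | succ m ih =>
    cases m with
    | zero =>
      rw [FlSum, List.ofFn_succ, List.ofFn_zero] at h
      cases h
      exact ⟨fun _ => 1, fun _ => isRelFactor_one (by simp), by simp⟩
    | succ m =>
      rw [FlSum, List.ofFn_succ, List.ofFn_succ] at h
      cases h with
      | cons _ _ _ s _ hs hr =>
        rw [← List.ofFn_succ (f := fun i => p i.succ)] at hs
        obtain ⟨f, hf, rfl⟩ := ih hs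
        obtain ⟨g, hg, rfl⟩ := hr.exists_isRelFactor hu
        refine ⟨Fin.cons g fun i => f i * g, ?_, ?_⟩
        · refine Fin.cases (hg.mono ?_) fun i => ((hf i).mul hg).mono (le_of_eq ?_)
          · push_cast
            nlinarith [mul_nonneg (Nat.cast_nonneg (α := ℝ) m) hL]
          · push_cast
            ring
        · simp [Fin.sum_univ_succ (n := m + 1), add_mul, Finset.sum_mul, mul_assoc]

theorem FlDot.exists_isRelFactor {u : ℝ} (hu₀ : 0 ≤ u) (hu : u < 1) {m : ℕ} {x y : Fin m → ℝ}
    {r : ℝ} (h : FlDot u x y r) :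
    ∃ f : Fin m → ℝ, (∀ i, IsRelFactor (m * logErr u) (f i)) ∧ r = ∑ i, x i * y i * f i := by
  obtain ⟨p, hp, hsum⟩ := h
  obtain ⟨f, hf, rfl⟩ := hsum.exists_isRelFactor hu₀ hu
  choose g hg hpg using fun i => (hp i).exists_isRelFactor hu
  refine ⟨fun i => g i * f i, fun i => ((hg i).mul (hf i)).mono (le_of_eq (by ring)), ?_⟩
  simp only [hpg, mul_assoc]

/-! ### Approximation relative to a majorant -/

/-- `y` approximates `x` up to a logarithmic error `c` relative to a majorant `X` of `|x|`. The
majorant is what remains of a relative error bound after cancellation in a sum. -/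
def IsApprox (c y x X : ℝ) : Prop := |x| ≤ X ∧ |y - x| ≤ (Real.exp c - 1) * X

theorem isApprox_self (x : ℝ) : IsApprox 0 x x |x| := ⟨le_rfl, by simp⟩

theorem IsRelFactor.isApprox_one {c f : ℝ} (hf : IsRelFactor c f) : IsApprox c f 1 1 :=
  ⟨by simp, by simpa using hf.abs_sub_one_le⟩

namespace IsApprox

variable {c e y x X z w W : ℝ}

theorem majorant_nonneg (h : IsApprox c y x X) : 0 ≤ X := (abs_nonneg _).trans h.1

theorem abs_le (h : IsApprox c y x X) : |y| ≤ Real.exp c * X := by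
  linarith [abs_sub_abs_le_abs_sub y x, h.1, h.2]

theorem mul (h : IsApprox c y x X) (k : IsApprox e z w W) :
    IsApprox (c + e) (y * z) (x * w) (X * W) := by
  refine ⟨by rw [abs_mul]; exact mul_le_mul h.1 k.1 (abs_nonneg _) h.majorant_nonneg, ?_⟩
  calc |y * z - x * w| = |(y - x) * z + x * (z - w)| := by ring_nf
    _ ≤ |y - x| * |z| + |x| * |z - w| := by
      rw [← abs_mul, ← abs_mul]
      exact abs_add_le _ _
    _ ≤ (Real.exp c - 1) * X * (Real.exp e * W) + X * ((Real.exp e - 1) * W) :=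
      add_le_add (mul_le_mul h.2 k.abs_le (abs_nonneg _) ((abs_nonneg _).trans h.2))
        (mul_le_mul h.1 k.2 (abs_nonneg _) h.majorant_nonneg)
    _ = (Real.exp (c + e) - 1) * (X * W) := by
      rw [Real.exp_add]
      ring

theorem mul_isRelFactor (h : IsApprox c y x X) (hf : IsRelFactor e z) :
    IsApprox (c + e) (y * z) x X := by
  simpa using h.mul hf.isApprox_one

theorem sum {ι : Type*} {s : Finset ι} {y x X : ι → ℝ}
    (h : ∀ i ∈ s, IsApprox c (y i) (x i) (X i)) :
    IsApprox c (∑ i ∈ s, y i) (∑ i ∈ s, x i) (∑ i ∈ s, X i) := by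
  constructor
  · exact (Finset.abs_sum_le_sum_abs _ _).trans (Finset.sum_le_sum fun i hi => (h i hi).1)
  · rw [← Finset.sum_sub_distrib, Finset.mul_sum]
    exact (Finset.abs_sum_le_sum_abs _ _).trans (Finset.sum_le_sum fun i hi => (h i hi).2)

end IsApprox

theorem IsRelFactor.isApprox_mul {c f : ℝ} (hf : IsRelFactor c f) (x : ℝ) :
    IsApprox c (x * f) x |x| := by
  simpa using (isApprox_self x).mul_isRelFactor hf

theorem FlDot.isApprox {u : ℝ} (hu₀ : 0 ≤ u) (hu : u < 1) {m : ℕ}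
    {x y xh yh X Y : Fin m → ℝ} {r c e : ℝ} (h : FlDot u xh yh r)
    (hx : ∀ i, IsApprox c (xh i) (x i) (X i)) (hy : ∀ i, IsApprox e (yh i) (y i) (Y i)) :
    IsApprox (c + e + m * logErr u) r (∑ i, x i * y i) (∑ i, X i * Y i) := by
  obtain ⟨f, hf, rfl⟩ := h.exists_isRelFactor hu₀ hu
  exact IsApprox.sum fun i _ => ((hx i).mul (hy i)).mul_isRelFactor (hf i)

theorem FlMulVec.isApprox {u : ℝ} (hu₀ : 0 ≤ u) (hu : u < 1) {k m : ℕ}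
    {A : Matrix (Fin k) (Fin m) ℝ} {x xh X : Fin m → ℝ} {r : Fin k → ℝ} {c : ℝ}
    (h : FlMulVec u A xh r) (hx : ∀ i, IsApprox c (xh i) (x i) (X i)) (i : Fin k) :
    IsApprox (c + m * logErr u) (r i) (∑ j, A i j * x j) (∑ j, |A i j| * X j) := by
  simpa using (h i).isApprox hu₀ hu (fun j => isApprox_self (A i j)) hx

/-! ### Rounding errors of the scores and of the softmax -/

theorem FlSim.isApprox {u c : ℝ} (hu₀ : 0 ≤ u) (hu : u < 1) {d m : ℕ}
    {Wq Wk : Matrix (Fin d) (Fin d) ℝ} {Zh Z : Fin (m + 1) → Fin d → ℝ}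
    {r : Fin (m + 1) → ℝ} (h : FlSim u Wq Wk Zh r)
    (hZ : ∀ i a, IsApprox c (Zh i a) (Z i a) |Z i a|) (i : Fin (m + 1)) :
    IsApprox ((3 * d + 1) * logErr u + 2 * c) (r i) (simScores Wq Wk Z i)
      (simScores (matAbs Wq) (matAbs Wk) (fun i a => |Z i a|) i) := by
  obtain ⟨q, hq, h⟩ := h
  obtain ⟨kv, dp, hkv, hdp, hr⟩ := h i
  obtain ⟨f, hf, hrf⟩ := hr.exists_isRelFactor hu
  have hdp := hdp.isApprox hu₀ hu (hq.isApprox hu₀ hu (hZ _)) (hkv.isApprox hu₀ hu (hZ i))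
  have hri := ((isApprox_self (1 / Real.sqrt d)).mul hdp).mul_isRelFactor hf
  rw [abs_of_nonneg (by positivity)] at hri
  convert hri using 1
  · ring
  · rw [hrf]
    ring
  · simp only [simScores, mul_comm]
  · simp only [simScores, matAbs, Matrix.of_apply, mul_comm]

theorem softmax_nonneg {m : ℕ} (s : Fin m → ℝ) (i : Fin m) : 0 ≤ softmax s i :=
  div_nonneg (Real.exp_pos _).le (Finset.sum_nonneg fun _ _ => (Real.exp_pos _).le)

theorem FlSoftmax.isApprox {u D : ℝ} (hu₀ : 0 ≤ u) (hu : u < 1) {m : ℕ}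
    {sh s psi : Fin m → ℝ} (h : FlSoftmax u sh psi) (hs : ∀ i, |sh i - s i| ≤ D) (i : Fin m) :
    IsApprox (2 * D + (m + 2) * logErr u) (psi i) (softmax s i) (softmax s i) := by
  obtain ⟨ex, hex, tot, htot, hpsi⟩ := h
  have numerator : ∀ i, ∃ f, IsRelFactor (D + logErr u) f ∧ ex i = Real.exp (s i) * f := by
    intro i
    obtain ⟨f, hf, hexf⟩ := (hex i).exists_isRelFactor hu
    refine ⟨Real.exp (sh i - s i) * f, (isRelFactor_exp (hs i)).mul hf, ?_⟩
    rw [hexf, ← mul_assoc, ← Real.exp_add, add_sub_cancel]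
  choose f hf hexf using numerator
  obtain ⟨g, hg, htotg⟩ := htot.exists_isRelFactor hu₀ hu
  obtain ⟨k, hk, hpsik⟩ := (hpsi i).exists_isRelFactor hu
  have hsum : 0 < ∑ j, Real.exp (s j) :=
    Finset.sum_pos (fun _ _ => Real.exp_pos _) ⟨i, Finset.mem_univ i⟩
  have denominator := IsRelFactor.centerMass (fun j _ => (Real.exp_pos (s j)).le) hsum
    fun j _ => (hf j).mul (hg j)
  have htot_eq : tot = (∑ j, Real.exp (s j)) *
      Finset.univ.centerMass (fun j => Real.exp (s j)) (fun j => f j * g j) := by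
    simp only [Finset.centerMass, smul_eq_mul, mul_inv_cancel_left₀ hsum.ne', htotg, hexf,
      mul_assoc]
  have hpsi_approx := (((hf i).mul denominator.inv).mul hk).isApprox_mul (softmax s i)
  rw [abs_of_nonneg (softmax_nonneg s i)] at hpsi_approx
  convert hpsi_approx using 1
  · ring
  · rw [hpsik, hexf, htot_eq, softmax, div_mul_eq_div_div]
    ring

/-! ### Singular values -/

section SingularValues

open scoped Matrix.Norms.L2Operator

variable {d : ℕ}

theorem l2_eq_norm (x : Fin d → ℝ) : l2 x = ‖WithLp.toLp 2 x‖ := by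
  simp [l2, EuclideanSpace.norm_eq]

theorem l2_nonneg (x : Fin d → ℝ) : 0 ≤ l2 x := Real.sqrt_nonneg _

theorem l2_abs (x : Fin d → ℝ) : l2 (fun i => |x i|) = l2 x := by
  simp [l2]

theorem abs_dotProduct_le_l2 (x y : Fin d → ℝ) : |x ⬝ᵥ y| ≤ l2 x * l2 y := by
  have := abs_real_inner_le_norm (WithLp.toLp 2 y) (WithLp.toLp 2 x)
  rwa [EuclideanSpace.inner_toLp_toLp, star_trivial, ← l2_eq_norm, ← l2_eq_norm, mul_comm] at this

theorem sigmaMax_eq_norm (B : Matrix (Fin d) (Fin d) ℝ) : sigmaMax B = ‖B‖ := by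
  rw [← Matrix.l2_opNorm_toEuclideanCLM, ← ContinuousLinearMap.sSup_sphere_eq_norm, sigmaMax, iSup]
  congr 1
  ext r
  simp only [Set.mem_range, Subtype.exists, Set.mem_image, mem_sphere_zero_iff_norm]
  exact ⟨fun ⟨x, hx, hr⟩ => ⟨WithLp.toLp 2 x, l2_eq_norm x ▸ hx, l2_eq_norm (B.mulVec x) ▸ hr⟩,
    fun ⟨x, hx, hr⟩ => ⟨x.ofLp, (l2_eq_norm x.ofLp).trans hx, (l2_eq_norm _).trans hr⟩⟩

theorem sigmaMax_nonneg (B : Matrix (Fin d) (Fin d) ℝ) : 0 ≤ sigmaMax B :=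
  Real.iSup_nonneg fun _ => l2_nonneg _

theorem l2_mulVec_le (B : Matrix (Fin d) (Fin d) ℝ) (x : Fin d → ℝ) :
    l2 (B.mulVec x) ≤ sigmaMax B * l2 x := by
  rw [sigmaMax_eq_norm, l2_eq_norm, l2_eq_norm]
  exact B.l2_opNorm_mulVec (WithLp.toLp 2 x)

theorem mulVec_dotProduct_mulVec_le (A B : Matrix (Fin d) (Fin d) ℝ) (x y : Fin d → ℝ) :
    A.mulVec x ⬝ᵥ B.mulVec y ≤ sigmaMax (A.transpose * B) * (l2 x * l2 y) := by
  calc A.mulVec x ⬝ᵥ B.mulVec y = x ⬝ᵥ (A.transpose * B).mulVec y := by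
        rw [← Matrix.mulVec_mulVec, Matrix.dotProduct_mulVec x, Matrix.vecMul_transpose]
    _ ≤ l2 x * l2 ((A.transpose * B).mulVec y) := (le_abs_self _).trans (abs_dotProduct_le_l2 _ _)
    _ ≤ l2 x * (sigmaMax (A.transpose * B) * l2 y) :=
      mul_le_mul_of_nonneg_left (l2_mulVec_le _ _) (l2_nonneg _)
    _ = sigmaMax (A.transpose * B) * (l2 x * l2 y) := by ring

theorem sigmaMin_le_l2_mulVec (B : Matrix (Fin d) (Fin d) ℝ) {x : Fin d → ℝ} (hx : l2 x = 1) :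
    sigmaMin B ≤ l2 (B.mulVec x) :=
  ciInf_le (f := fun x : {x : Fin d → ℝ // l2 x = 1} => l2 (B.mulVec x.1))
    ⟨0, Set.forall_mem_range.2 fun _ => l2_nonneg _⟩ ⟨x, hx⟩

theorem exists_l2_eq_one (hd : 0 < d) : ∃ x : Fin d → ℝ, l2 x = 1 :=
  ⟨Pi.single ⟨0, hd⟩ 1, by simp [l2_eq_norm]⟩

theorem sigmaMin_le_sigmaMax (hd : 0 < d) (B : Matrix (Fin d) (Fin d) ℝ) :
    sigmaMin B ≤ sigmaMax B := by
  obtain ⟨x, hx⟩ := exists_l2_eq_one hd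
  simpa [hx] using (sigmaMin_le_l2_mulVec B hx).trans (l2_mulVec_le B x)

theorem sigmaMin_pos (hd : 0 < d) {B : Matrix (Fin d) (Fin d) ℝ} (hB : B.det ≠ 0) :
    0 < sigmaMin B := by
  have expansive (x : Fin d → ℝ) (hx : l2 x = 1) : 1 ≤ sigmaMax B⁻¹ * l2 (B.mulVec x) := by
    have := l2_mulVec_le B⁻¹ (B.mulVec x)
    rwa [Matrix.mulVec_mulVec, Matrix.nonsing_inv_mul _ hB.isUnit, Matrix.one_mulVec, hx] at this
  obtain ⟨x, hx⟩ := exists_l2_eq_one hd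
  have inv_pos : 0 < sigmaMax B⁻¹ :=
    pos_of_mul_pos_left (one_pos.trans_le (expansive x hx)) (l2_nonneg _)
  have : Nonempty {x : Fin d → ℝ // l2 x = 1} := ⟨⟨x, hx⟩⟩
  exact (one_div_pos.2 inv_pos).trans_le
    (le_ciInf fun y => (div_le_iff₀' inv_pos).2 (expansive y.1 y.2))

theorem one_le_sigmaMax_div_sigmaMin (hd : 0 < d) {B : Matrix (Fin d) (Fin d) ℝ}
    (hB : B.det ≠ 0) : 1 ≤ sigmaMax B / sigmaMin B :=
  (one_le_div (sigmaMin_pos hd hB)).2 (sigmaMin_le_sigmaMax hd B)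

end SingularValues

/-! ### Size of the scores and of the attention -/

/-- A bound for the similarity scores of all prefixes of `X` that is not affected by taking
absolute values of the weights and of the arguments. -/
def scoreBound {d n : ℕ} (Wq Wk : Matrix (Fin d) (Fin d) ℝ) (X : Fin n → Fin d → ℝ) : ℝ :=
  1 / Real.sqrt d * (sigmaMax ((matAbs Wk).transpose * matAbs Wq) * ⨆ t : Fin n, l2 (X t) ^ 2)

/-- The attention matrix of `X` with `W_v` and the columns of `X` replaced by their absolute
values, but with the weights `ψ(S(X_t))` of `X` itself: the numerator of `ξ(A, X)`. -/
def absAttn {d n : ℕ} (Wq Wk Wv : Matrix (Fin d) (Fin d) ℝ) (X : Fin n → Fin d → ℝ)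
    (t : Fin n) (i : Fin d) : ℝ :=
  ∑ a, |Wv i a| * ∑ j : Fin (t.1 + 1),
    |prefixCols X t j a| * softmax (simScores Wq Wk (prefixCols X t)) j

section Attention

variable {d n : ℕ} (Wq Wk Wv : Matrix (Fin d) (Fin d) ℝ) (X : Fin n → Fin d → ℝ)

theorem scoreBound_nonneg : 0 ≤ scoreBound Wq Wk X :=
  mul_nonneg (by positivity)
    (mul_nonneg (sigmaMax_nonneg _) (Real.iSup_nonneg fun _ => sq_nonneg _))

theorem simScores_matAbs_le (t : Fin n) (j : Fin (t.1 + 1)) :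
    simScores (matAbs Wq) (matAbs Wk) (fun i a => |prefixCols X t i a|) j ≤
      scoreBound Wq Wk X := by
  have l2_sq_le (s : Fin n) : l2 (X s) ^ 2 ≤ ⨆ t : Fin n, l2 (X t) ^ 2 :=
    le_ciSup (f := fun t => l2 (X t) ^ 2) (Set.finite_range _).bddAbove s
  have l2_mul_le (s t : Fin n) : l2 (X s) * l2 (X t) ≤ ⨆ t : Fin n, l2 (X t) ^ 2 := by
    nlinarith [sq_nonneg (l2 (X s) - l2 (X t)), l2_sq_le s, l2_sq_le t]
  refine mul_le_mul_of_nonneg_left ((mulVec_dotProduct_mulVec_le _ _ _ _).trans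
    (mul_le_mul_of_nonneg_left ?_ (sigmaMax_nonneg _))) (by positivity)
  rw [l2_abs, l2_abs]
  exact l2_mul_le _ _

theorem absAttn_nonneg (t : Fin n) (i : Fin d) : 0 ≤ absAttn Wq Wk Wv X t i :=
  Finset.sum_nonneg fun _ _ => mul_nonneg (abs_nonneg _)
    (Finset.sum_nonneg fun _ _ => mul_nonneg (abs_nonneg _) (softmax_nonneg _ _))

theorem xiAttn_eq_iSup : xiAttn Wq Wk Wv X =
    ⨆ p : Fin d × Fin n, absAttn Wq Wk Wv X p.2 p.1 / |attn Wq Wk Wv X p.2 p.1| := by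
  refine iSup_congr fun p => ?_
  simp only [absAttn, attn, mul_comm (softmax _ _)]
  exact congr_arg₂ (fun x y => x / |y|)
    (Matrix.dotProduct_mulVec _ (fun a j => |prefixCols X p.2 j a|) _).symm
    (Matrix.dotProduct_mulVec _ (fun a j => prefixCols X p.2 j a) _).symm

theorem xiAttn_nonneg : 0 ≤ xiAttn Wq Wk Wv X := by
  rw [xiAttn_eq_iSup]
  exact Real.iSup_nonneg fun _ => div_nonneg (absAttn_nonneg ..) (abs_nonneg _)

variable {Wq Wk Wv X}

theorem absAttn_le {t : Fin n} {i : Fin d} (hA : attn Wq Wk Wv X t i ≠ 0) :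
    absAttn Wq Wk Wv X t i ≤ xiAttn Wq Wk Wv X * |attn Wq Wk Wv X t i| := by
  rw [← div_le_iff₀ (abs_pos.2 hA), xiAttn_eq_iSup]
  exact le_ciSup (f := fun p : Fin d × Fin n => absAttn Wq Wk Wv X p.2 p.1 /
    |attn Wq Wk Wv X p.2 p.1|) (Set.finite_range _).bddAbove (i, t)

end Attention

/-! ### Rounding error of the attention -/

/-- The logarithmic error, relative to `absAttn`, of the computed attention of a `d × n` matrix
that is perturbed by a relative error `ρ`, when the scores are bounded by `K`. The last summand
counts the softmax (`n + 2`), the inner products with its weights (`n`) and the product with `W_v`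
(`d`). -/
def attnLogErr (d n : ℕ) (K u ρ : ℝ) : ℝ :=
  logErr ρ + 2 * (K * (Real.exp ((3 * d + 1) * logErr u + 2 * logErr ρ) - 1)) +
    (2 * n + 2 + d) * logErr u

theorem FlAttn.abs_sub_le {u ρ : ℝ} (hu₀ : 0 ≤ u) (hu : u < 1) (hρ₀ : 0 ≤ ρ) (hρ : ρ ≤ 1)
    {d n : ℕ} {Wq Wk Wv : Matrix (Fin d) (Fin d) ℝ} {X Xh r : Fin n → Fin d → ℝ}
    (h : FlAttn u Wq Wk Wv Xh r)
    (hX : ∀ t i, IsApprox (logErr ρ) (Xh t i) (X t i) |X t i|) (t : Fin n) (i : Fin d) :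
    |r t i - attn Wq Wk Wv X t i| ≤
      (Real.exp (attnLogErr d n (scoreBound Wq Wk X) u ρ) - 1) * absAttn Wq Wk Wv X t i := by
  obtain ⟨s, psi, z, hs, hpsi, hz, hr⟩ := h t
  have hZ (j : Fin (t.1 + 1)) (a : Fin d) : IsApprox (logErr ρ) (prefixCols Xh t j a)
      (prefixCols X t j a) |prefixCols X t j a| := hX _ a
  have hL := logErr_nonneg hu₀ hu.le
  have score_err (j : Fin (t.1 + 1)) : |s j - simScores Wq Wk (prefixCols X t) j| ≤
      scoreBound Wq Wk X * (Real.exp ((3 * d + 1) * logErr u + 2 * logErr ρ) - 1) := by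
    refine (hs.isApprox hu₀ hu hZ j).2.trans ((mul_comm _ _).trans_le ?_)
    refine mul_le_mul_of_nonneg_right (simScores_matAbs_le Wq Wk X t j) (sub_nonneg.2 ?_)
    have := logErr_nonneg hρ₀ hρ
    exact Real.one_le_exp (by positivity)
  have attn_approx := hr.isApprox hu₀ hu
    (fun a => (hz a).isApprox hu₀ hu (fun j => hZ j a) (hpsi.isApprox hu₀ hu score_err)) i
  simp only [attn, mul_comm (softmax _ _)]
  refine attn_approx.2.trans (mul_le_mul_of_nonneg_right ?_ (absAttn_nonneg Wq Wk Wv X t i))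
  have ht : (t.1 : ℝ) + 1 ≤ n := by exact_mod_cast t.2
  gcongr
  simp only [attnLogErr]
  push_cast
  nlinarith [mul_le_mul_of_nonneg_right ht hL]

/-! ### First-order expansion of the error bound -/

open Asymptotics Topology in
theorem isBigO_sub_sub_fderiv {𝕜 E F : Type*} [NontriviallyNormedField 𝕜] [NormedAddCommGroup E]
    [NormedSpace 𝕜 E] [NormedAddCommGroup F] [NormedSpace 𝕜 F] {f : E → F} {x : E}
    (h : AnalyticAt 𝕜 f x) :
    (fun y => f (x + y) - f x - fderiv 𝕜 f x y) =O[𝓝 0] fun y => ‖y‖ ^ 2 := by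
  obtain ⟨p, hp⟩ := h
  simpa [FormalMultilinearSeries.partialSum, Finset.sum_range_succ, hp.fderiv_eq, hp.coeff_zero,
    sub_sub, Matrix.vec_single_eq_const] using hp.isBigO_sub_partialSum_pow 2

theorem logErr_zero : logErr 0 = 0 := by simp [logErr]

theorem hasDerivAt_logErr_zero : HasDerivAt logErr 1 0 := by
  simpa [logErr, Function.comp_def] using!
    (((hasDerivAt_id (0 : ℝ)).const_sub 1).log (by simp)).neg

theorem analyticAt_logErr_zero : AnalyticAt ℝ logErr 0 := by
  unfold logErr
  fun_prop (disch := simp)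

theorem analyticAt_attnLogErr_zero (d n : ℕ) (K : ℝ) :
    AnalyticAt ℝ (fun p : ℝ × ℝ => attnLogErr d n K p.1 p.2) 0 := by
  have hu : AnalyticAt ℝ (fun p : ℝ × ℝ => logErr p.1) 0 :=
    AnalyticAt.fun_comp (g := logErr) analyticAt_logErr_zero analyticAt_fst
  have hρ : AnalyticAt ℝ (fun p : ℝ × ℝ => logErr p.2) 0 :=
    AnalyticAt.fun_comp (g := logErr) analyticAt_logErr_zero analyticAt_snd
  unfold attnLogErr
  fun_prop

theorem attnLogErr_zero (d n : ℕ) (K : ℝ) : attnLogErr d n K 0 0 = 0 := by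
  simp [attnLogErr, logErr_zero]

theorem fderiv_exp_attnLogErr_zero (d n : ℕ) (K u ρ : ℝ) :
    fderiv ℝ (fun p : ℝ × ℝ => Real.exp (attnLogErr d n K p.1 p.2) - 1) 0 (u, ρ) =
      ρ + 2 * (K * ((3 * d + 1) * u + 2 * ρ)) + (2 * n + 2 + d) * u := by
  have hu : HasFDerivAt (fun p : ℝ × ℝ => logErr p.1) _ 0 :=
    HasDerivAt.comp_hasFDerivAt (h₂ := logErr) (0 : ℝ × ℝ) hasDerivAt_logErr_zero
      (ContinuousLinearMap.fst ℝ ℝ ℝ).hasFDerivAt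
  have hρ : HasFDerivAt (fun p : ℝ × ℝ => logErr p.2) _ 0 :=
    HasDerivAt.comp_hasFDerivAt (h₂ := logErr) (0 : ℝ × ℝ) hasDerivAt_logErr_zero
      (ContinuousLinearMap.snd ℝ ℝ ℝ).hasFDerivAt
  have score := (((hu.const_mul (3 * d + 1 : ℝ)).add (hρ.const_mul 2)).exp.sub_const 1).const_mul K
  have total := (hρ.add (score.const_mul 2)).add (hu.const_mul (2 * n + 2 + d : ℝ))
  exact (DFunLike.congr_fun (total.exp.sub_const 1).fderiv (u, ρ)).trans
    (by simp [logErr_zero, mul_add])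

theorem fderiv_exp_attnLogErr_zero_le {d : ℕ} (hd : 0 < d) (n : ℕ) {K u : ℝ} (hK : 0 ≤ K)
    (hu : 0 ≤ u) (ρ : ℝ) :
    fderiv ℝ (fun p : ℝ × ℝ => Real.exp (attnLogErr d n K p.1 p.2) - 1) 0 (u, ρ) ≤
      (1 + 4 * K) * ((2 * n + 3 * d) * u + ρ) := by
  have hd₁ : (0 : ℝ) ≤ d - 1 := sub_nonneg.2 (by exact_mod_cast hd)
  rw [fderiv_exp_attnLogErr_zero, ← sub_nonneg]
  calc (0 : ℝ) ≤ 2 * (d - 1) * u + 2 * K * (4 * n + 3 * (d - 1) + 2) * u := by positivity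
    _ = _ := by ring

theorem exists_exp_attnLogErr_sub_one_le {d : ℕ} (hd : 0 < d) (n : ℕ) {K : ℝ} (hK : 0 ≤ K) :
    ∃ C ε : ℝ, 0 ≤ C ∧ 0 < ε ∧ ε < 1 ∧ ∀ u ρ, 0 ≤ u → u ≤ ε → 0 ≤ ρ → ρ ≤ ε →
      Real.exp (attnLogErr d n K u ρ) - 1 ≤
        (1 + 4 * K) * ((2 * n + 3 * d) * u + ρ) + C * (u ^ 2 + ρ ^ 2) := by
  have analytic : AnalyticAt ℝ (fun p : ℝ × ℝ => Real.exp (attnLogErr d n K p.1 p.2) - 1) 0 := by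
    have := analyticAt_attnLogErr_zero d n K
    fun_prop
  obtain ⟨C, hC, hbound⟩ := (isBigO_sub_sub_fderiv analytic).exists_nonneg
  obtain ⟨δ, hδ, hball⟩ := Metric.eventually_nhds_iff_ball.1 hbound.bound
  refine ⟨C, min (δ / 2) (1 / 2), hC, by positivity, by norm_num, fun u ρ hu₀ hu hρ₀ hρ => ?_⟩
  have mem_ball : ((u, ρ) : ℝ × ℝ) ∈ Metric.ball 0 δ := by
    rw [mem_ball_zero_iff, Prod.norm_mk, Real.norm_of_nonneg hu₀, Real.norm_of_nonneg hρ₀]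
    exact (max_le hu hρ).trans_lt ((min_le_left _ _).trans_lt (half_lt_self hδ))
  have norm_sq_le : ‖((u, ρ) : ℝ × ℝ)‖ ^ 2 ≤ u ^ 2 + ρ ^ 2 := by
    rw [Prod.norm_mk, Real.norm_of_nonneg hu₀, Real.norm_of_nonneg hρ₀]
    rcases max_choice u ρ with h | h <;> rw [h] <;> linarith [sq_nonneg u, sq_nonneg ρ]
  have taylor := (le_abs_self _).trans (hball _ mem_ball)
  simp only [zero_add, Prod.fst_zero, Prod.snd_zero, attnLogErr_zero, Real.exp_zero, sub_self,
    sub_zero, norm_pow, norm_norm] at taylor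
  linarith [fderiv_exp_attnLogErr_zero_le hd n hK hu₀ ρ, mul_le_mul_of_nonneg_left norm_sq_le hC]

/-! ### Componentwise relative distance -/

theorem abs_sub_le_of_rhoM {d n : ℕ} {Xh X : Fin n → Fin d → ℝ} (h : rhoM Xh X ≠ ⊤) (t : Fin n)
    (i : Fin d) : |Xh t i - X t i| ≤ (rhoM Xh X).toReal * |X t i| := by
  have column_le : rhoV (Xh t) (X t) ≤ rhoM Xh X := le_iSup (fun t => rhoV (Xh t) (X t)) t
  have entry_le := iSup_le_iff.1 column_le i
  split_ifs at entry_le with hX hXh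
  · simp [hX, hXh]
  · exact absurd (top_le_iff.1 entry_le) h
  · rw [← div_le_iff₀ (abs_pos.2 hX)]
    exact (ENNReal.ofReal_le_iff_le_toReal h).1 entry_le

theorem rhoM_le_ofReal {d n : ℕ} {Y X : Fin n → Fin d → ℝ} {b : ℝ}
    (h : ∀ t i, |Y t i - X t i| ≤ b * |X t i|) : rhoM Y X ≤ ENNReal.ofReal b := by
  refine iSup_le fun t => iSup_le fun i => ?_
  have hti := h t i
  split_ifs with hX hY
  · exact zero_le
  · simp [hX, hY] at hti
  · exact ENNReal.ofReal_le_ofReal ((div_le_iff₀ (abs_pos.2 hX)).2 hti)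

theorem isApprox_logErr {ρ x y : ℝ} (hρ : ρ < 1) (h : |y - x| ≤ ρ * |x|) :
    IsApprox (logErr ρ) y x |x| := by
  rcases eq_or_ne x 0 with rfl | hx
  · exact ⟨le_rfl, by simpa using h⟩
  · have : |y / x - 1| ≤ ρ := by
      rwa [div_sub_one hx, abs_div, div_le_iff₀ (abs_pos.2 hx)]
    simpa [mul_div_cancel₀ _ hx] using (isRelFactor_logErr hρ this).isApprox_mul x

theorem exists_forall_lt_div_le {ε : ℝ} (hε : 0 < ε) (κ : ℝ) :
    ∃ βs : ℝ, 0 < βs ∧ βs ≤ 1 ∧ ∀ β, 0 ≤ β → β < βs → β / κ ≤ ε := by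
  rcases le_or_gt κ 0 with hκ | hκ
  · exact ⟨1, one_pos, le_rfl, fun β hβ _ => (div_nonpos_of_nonneg_of_nonpos hβ hκ).trans hε.le⟩
  · exact ⟨min 1 (ε * κ), by positivity, min_le_left _ _, fun β _ hβ =>
      (div_le_iff₀ hκ).2 (hβ.le.trans (min_le_right _ _))⟩

theorem attention_perturbed_general {d n : ℕ} (Wq Wk Wv : Matrix (Fin d) (Fin d) ℝ)
    (X : Fin n → Fin d → ℝ) (hA : ∀ t i, attn Wq Wk Wv X t i ≠ 0) :
    ∃ C ε : ℝ, 0 < ε ∧ ∀ u : ℝ, 0 ≤ u → u ≤ ε → ∀ Xh : Fin n → Fin d → ℝ,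
      rhoM Xh X ≤ ENNReal.ofReal ε → ∀ r : Fin n → Fin d → ℝ, FlAttn u Wq Wk Wv Xh r →
        rhoM r (attn Wq Wk Wv X) ≤ ENNReal.ofReal
          (xiAttn Wq Wk Wv X *
            (1 + 4 / Real.sqrt d * sigmaMax ((matAbs Wk).transpose * matAbs Wq) *
              (⨆ t : Fin n, l2 (X t) ^ 2)) *
            ((2 * (n : ℝ) + 3 * d) * u + (rhoM Xh X).toReal)
          + C * (u ^ 2 + (rhoM Xh X).toReal ^ 2)) := by
  rcases d.eq_zero_or_pos with rfl | hd
  · exact ⟨0, 1, one_pos, fun _ _ _ _ _ _ _ => by simp [rhoM, rhoV]⟩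
  obtain ⟨C, ε, hC, hε, hε₁, hbound⟩ :=
    exists_exp_attnLogErr_sub_one_le hd n (scoreBound_nonneg Wq Wk X)
  refine ⟨xiAttn Wq Wk Wv X * C, ε, hε, fun u hu₀ hu Xh hXh r hr => rhoM_le_ofReal fun t i => ?_⟩
  have hXh_top := ne_top_of_le_ne_top ENNReal.ofReal_ne_top hXh
  have hρ := ENNReal.toReal_le_of_le_ofReal hε.le hXh
  have hρ₀ : 0 ≤ (rhoM Xh X).toReal := ENNReal.toReal_nonneg
  have input (t : Fin n) (i : Fin d) :=
    isApprox_logErr (hρ.trans_lt hε₁) (abs_sub_le_of_rhoM hXh_top t i)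
  have := scoreBound_nonneg Wq Wk X
  calc |r t i - attn Wq Wk Wv X t i|
    _ ≤ _ := hr.abs_sub_le hu₀ (hu.trans_lt hε₁) hρ₀ (hρ.trans hε₁.le) input t i
    _ ≤ ((1 + 4 * scoreBound Wq Wk X) * ((2 * n + 3 * d) * u + (rhoM Xh X).toReal) +
          C * (u ^ 2 + (rhoM Xh X).toReal ^ 2)) * absAttn Wq Wk Wv X t i :=
      mul_le_mul_of_nonneg_right (hbound u _ hu₀ hu hρ₀ hρ) (absAttn_nonneg ..)
    _ ≤ _ * (xiAttn Wq Wk Wv X * |attn Wq Wk Wv X t i|) :=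
      mul_le_mul_of_nonneg_left (absAttn_le (hA t i)) (by positivity)
    _ = _ := by
      rw [scoreBound]
      ring

/-- rounding error of the self-attention at a perturbed argument. -/
theorem attention_perturbed {d n : ℕ} (hd : 2 ≤ d) (Wq Wk Wv : Matrix (Fin d) (Fin d) ℝ)
    (hdet : (Wk.transpose * Wq).det ≠ 0) (X : Fin n → Fin d → ℝ)
    (hA : ∀ t i, attn Wq Wk Wv X t i ≠ 0) :
    ∃ βs : ℝ, 0 < βs ∧ βs ≤ 1 ∧ ∀ β : ℝ, 0 ≤ β → β < βs →
      ∃ C u0 : ℝ, 0 < u0 ∧ ∀ u : ℝ, 0 < u → u ≤ u0 →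
        ∀ Xh : Fin n → Fin d → ℝ,
          rhoM Xh X ≤ ENNReal.ofReal (β / kccM (attn Wq Wk Wv) X) →
        ∀ r : Fin n → Fin d → ℝ, FlAttn u Wq Wk Wv Xh r →
          rhoM r (attn Wq Wk Wv X) ≤ ENNReal.ofReal
            (xiAttn Wq Wk Wv X *
              (1 + 4 / Real.sqrt d * sigmaMax ((matAbs Wk).transpose * matAbs Wq) *
                (sigmaMax (Wk.transpose * Wq) / sigmaMin (Wk.transpose * Wq)) *
                (⨆ t : Fin n, l2 (X t) ^ 2)) *
              ((2 * (n : ℝ) + 3 * d) * u + (rhoM Xh X).toReal)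
            + C * (u ^ 2 + (rhoM Xh X).toReal ^ 2)) := by
  obtain ⟨C, ε, hε, hbound⟩ := attention_perturbed_general Wq Wk Wv X hA
  obtain ⟨βs, hβs, hβs₁, hdiv⟩ := exists_forall_lt_div_le hε (kccM (attn Wq Wk Wv) X)
  refine ⟨βs, hβs, hβs₁, fun β hβ₀ hβ => ⟨C, ε, hε, fun u hu₀ hu Xh hXh r hr => ?_⟩⟩
  have hXh_le := hXh.trans (ENNReal.ofReal_le_ofReal (hdiv β hβ₀ hβ))
  refine (hbound u hu₀.le hu Xh hXh_le r hr).trans (ENNReal.ofReal_le_ofReal ?_)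
  have cond_ge := one_le_sigmaMax_div_sigmaMin (by linarith) hdet
  have hxi := xiAttn_nonneg Wq Wk Wv X
  have hsigma := sigmaMax_nonneg ((matAbs Wk).transpose * matAbs Wq)
  gcongr xiAttn Wq Wk Wv X * (1 + ?_ * _) * _ + _
  · exact Real.iSup_nonneg fun _ => sq_nonneg _
  · exact le_mul_of_one_le_right (by positivity) cond_ge

end TR
end
end

section
/- Let x ∈ ℝ^d with centred vector c̊(x) = x − μ(x)e having all entries nonzero, where μ(x) = (1/d)Σᵢxᵢ and e is the all-ones vector. The floating-point evaluation of the centring satisfies, for all sufficiently small u: ρ_c( fl(c̊(x)), c̊(x) ) ≤ ( 1 + ‖x‖₁/‖c̊(x)‖_{−∞} ) u + C u² for a constant C independent of u, where ‖y‖_{−∞} = min_i |y_i| and ‖x‖₁ = Σᵢ|xᵢ|. -/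
open scoped BigOperators ENNReal

noncomputable section

namespace TR

/-!
A rounding `a = b (1 + δ)` of an inexact value `b` of `c` satisfies
`a - c = c δ + (b - c) (1 + δ)`: it adds a fresh relative error `u` and inflates the inherited one
by `1 + u`. Hence `k` successive roundings produce an error of at most `(1 + u) ^ k - 1` relative
to any bound on the magnitudes involved. The `d - 1` additions and the division computing the mean
thus commit an error of at most `((1 + u) ^ d - 1) ‖x‖₁ / d ≈ u ‖x‖₁`, which the subtraction from
`x i` compares with `|centr x i| ≥ lminf (centr x)`.
-/

theorem one_add_pow_le_one_add_mul_add_sq {u : ℝ} {n : ℕ} (hu : -1 ≤ u) (hnu : |n * u| ≤ 1) :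
    (1 + u) ^ n ≤ 1 + n * u + (n * u) ^ 2 := by
  have pow_le_exp : (1 + u) ^ n ≤ Real.exp (n * u) := by
    rw [Real.exp_nat_mul]
    exact pow_le_pow_left₀ (by linarith) (by linarith [Real.add_one_le_exp u]) n
  linarith [le_of_abs_le (Real.abs_exp_sub_one_sub_id_le hnu)]

theorem one_add_pow_sub_one_mul_le {u : ℝ} {d : ℕ} (hu : 0 ≤ u) (hdu : (d + 1) * u ≤ 1) :
    ((1 + u) ^ d - 1) * (1 + u) ≤ d * u + (d + 1) ^ 2 * u ^ 2 := by
  have h := one_add_pow_le_one_add_mul_add_sq (n := d + 1) (by linarith : -1 ≤ u)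
    (by rw [abs_of_nonneg (by positivity)]; exact_mod_cast hdu)
  push_cast at h
  linarith [pow_succ (1 + u) d]

theorem Fp.nonneg {u a b : ℝ} (h : Fp u a b) : 0 ≤ u := by
  obtain ⟨δ, hδ, -⟩ := h
  exact (abs_nonneg δ).trans hδ

theorem Fp.abs_sub_le {u a b : ℝ} (h : Fp u a b) (c : ℝ) :
    |a - c| ≤ |c| * u + |b - c| * (1 + u) := by
  obtain ⟨δ, hδ, rfl⟩ := h
  have one_add_δ : |1 + δ| ≤ 1 + u := (abs_add_le 1 δ).trans (by simpa using hδ)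
  calc |b * (1 + δ) - c| = |c * δ + (b - c) * (1 + δ)| := by ring_nf
    _ ≤ |c| * |δ| + |b - c| * |1 + δ| := by
      simpa only [abs_mul] using abs_add_le (c * δ) ((b - c) * (1 + δ))
    _ ≤ |c| * u + |b - c| * (1 + u) := by gcongr

theorem Fp.abs_sub_le_pow_succ {u a b c M : ℝ} {k : ℕ} (h : Fp u a b) (hc : |c| ≤ M)
    (hb : |b - c| ≤ ((1 + u) ^ k - 1) * M) : |a - c| ≤ ((1 + u) ^ (k + 1) - 1) * M := by
  have hu := h.nonneg
  calc |a - c| ≤ |c| * u + |b - c| * (1 + u) := h.abs_sub_le c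
    _ ≤ M * u + ((1 + u) ^ k - 1) * M * (1 + u) := by gcongr
    _ = ((1 + u) ^ (k + 1) - 1) * M := by ring

theorem FlSumL.abs_sub_sum_le {u s : ℝ} {l : List ℝ} (h : FlSumL u l s) :
    |s - l.sum| ≤ ((1 + u) ^ (l.length - 1) - 1) * (l.map (|·|)).sum := by
  induction h with
  | nil => simp
  | single x => simp
  | cons x y l s r _ hr ih =>
    have hpow : 1 ≤ (1 + u) ^ l.length := one_le_pow₀ (by linarith [hr.nonneg])
    have abs_sum_le : |(x :: y :: l).sum| ≤ ((x :: y :: l).map (|·|)).sum :=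
      List.le_sum_of_subadditive _ abs_zero.le abs_add_le _
    refine hr.abs_sub_le_pow_succ abs_sum_le ?_
    calc |x + s - (x :: y :: l).sum| = |s - (y :: l).sum| := by
          rw [List.sum_cons, add_sub_add_left_eq_sub]
      _ ≤ ((1 + u) ^ l.length - 1) * ((y :: l).map (|·|)).sum := ih
      _ ≤ ((1 + u) ^ l.length - 1) * ((x :: y :: l).map (|·|)).sum := by
          rw [List.map_cons (l := y :: l), List.sum_cons]
          exact mul_le_mul_of_nonneg_left (le_add_of_nonneg_left (abs_nonneg x))
            (sub_nonneg.mpr hpow)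

section Vector

variable {d : ℕ} {x : Fin d → ℝ}

theorem l1_nonneg (x : Fin d → ℝ) : 0 ≤ l1 x :=
  Finset.sum_nonneg fun i _ => abs_nonneg (x i)

theorem lminf_nonneg (x : Fin d → ℝ) : 0 ≤ lminf x :=
  Real.iInf_nonneg fun i => abs_nonneg (x i)

theorem lminf_le_abs (x : Fin d → ℝ) (i : Fin d) : lminf x ≤ |x i| :=
  ciInf_le (Set.finite_range _).bddBelow i

theorem lminf_pos [Nonempty (Fin d)] (hx : ∀ i, x i ≠ 0) : 0 < lminf x := by
  obtain ⟨i, hi⟩ := exists_eq_ciInf_of_finite (f := fun i => |x i|)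
  exact (abs_pos.mpr (hx i)).trans_eq hi

theorem rhoV_le_ofReal {xh : Fin d → ℝ} {b : ℝ} (h : ∀ i, |xh i - x i| ≤ b * |x i|) :
    rhoV xh x ≤ ENNReal.ofReal b := by
  refine iSup_le fun i => ?_
  split_ifs with hxi hxhi
  · exact zero_le
  · exact absurd (by simpa [hxi] using h i) hxhi
  · exact ENNReal.ofReal_le_ofReal ((div_le_iff₀ (abs_pos.mpr hxi)).mpr (h i))

theorem FlSum.abs_sub_sum_le {u s : ℝ} (h : FlSum u x s) :
    |s - ∑ i, x i| ≤ ((1 + u) ^ (d - 1) - 1) * l1 x := by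
  simpa only [List.sum_ofFn, List.length_ofFn, List.map_ofFn, Function.comp_apply, l1]
    using FlSumL.abs_sub_sum_le h

theorem FlSum.abs_sub_meanv_le [NeZero d] {u s m : ℝ} (hs : FlSum u x s)
    (hm : Fp u m (s / d)) : |m - meanv x| ≤ ((1 + u) ^ d - 1) * (l1 x / d) := by
  have abs_div_d (t : ℝ) : |t / d| = |t| / d := by rw [abs_div, Nat.abs_cast]
  have meanv_le : |meanv x| ≤ l1 x / d := by
    rw [meanv, abs_div_d]
    gcongr
    exact Finset.abs_sum_le_sum_abs x Finset.univ
  have quotient_le : |s / d - meanv x| ≤ ((1 + u) ^ (d - 1) - 1) * (l1 x / d) := by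
    rw [meanv, ← sub_div, abs_div_d, ← mul_div_assoc]
    gcongr
    exact hs.abs_sub_sum_le
  simpa only [Nat.sub_add_cancel NeZero.one_le] using hm.abs_sub_le_pow_succ meanv_le quotient_le

theorem FlCentr.nonneg {u : ℝ} {r : Fin d → ℝ} (h : FlCentr u x r) : 0 ≤ u := by
  obtain ⟨_, _, _, hm, _⟩ := h
  exact hm.nonneg

theorem FlCentr.abs_sub_centr_le {u : ℝ} {r : Fin d → ℝ} (h : FlCentr u x r) (i : Fin d) :
    |r i - centr x i| ≤ |centr x i| * u + ((1 + u) ^ d - 1) * (l1 x / d) * (1 + u) := by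
  obtain ⟨s, m, hs, hm, hr⟩ := h
  have : NeZero d := .of_pos i.pos
  have hu := hm.nonneg
  have inherited : |x i - m - centr x i| ≤ ((1 + u) ^ d - 1) * (l1 x / d) := by
    rw [centr, sub_sub_sub_cancel_left, abs_sub_comm]
    exact hs.abs_sub_meanv_le hm
  exact ((hr i).abs_sub_le (centr x i)).trans (by gcongr)

theorem FlCentr.rhoV_centr_le {u : ℝ} {r : Fin d → ℝ} (h : FlCentr u x r)
    (hx : ∀ i, centr x i ≠ 0) :
    rhoV r (centr x) ≤
      ENNReal.ofReal (u + ((1 + u) ^ d - 1) * (1 + u) * (l1 x / d / lminf (centr x))) := by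
  refine rhoV_le_ofReal fun i => ?_
  have : Nonempty (Fin d) := ⟨i⟩
  have hmin : 0 < lminf (centr x) := lminf_pos hx
  have hu : 0 ≤ u := h.nonneg
  have hpow : 0 ≤ (1 + u) ^ d - 1 := sub_nonneg.mpr (one_le_pow₀ (by linarith))
  have hl1 : 0 ≤ l1 x := l1_nonneg x
  calc |r i - centr x i|
      ≤ |centr x i| * u + ((1 + u) ^ d - 1) * (l1 x / d) * (1 + u) := h.abs_sub_centr_le i
    _ = u * |centr x i| + ((1 + u) ^ d - 1) * (1 + u) * (l1 x / d / lminf (centr x)) *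
          lminf (centr x) := by
        rw [mul_assoc _ (l1 x / d / _), div_mul_cancel₀ _ hmin.ne']
        ring
    _ ≤ u * |centr x i| + ((1 + u) ^ d - 1) * (1 + u) * (l1 x / d / lminf (centr x)) *
          |centr x i| := by
        gcongr
        exact lminf_le_abs (centr x) i
    _ = (u + ((1 + u) ^ d - 1) * (1 + u) * (l1 x / d / lminf (centr x))) * |centr x i| :=
        (add_mul _ _ _).symm

end Vector

/-- forward rounding error of the centring. -/
theorem centring_rounding {d : ℕ} (x : Fin d → ℝ) (hx : ∀ i, centr x i ≠ 0) :
    ∃ C u0 : ℝ, 0 < u0 ∧ ∀ u : ℝ, 0 < u → u ≤ u0 →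
      ∀ r : Fin d → ℝ, FlCentr u x r →
        rhoV r (centr x) ≤
          ENNReal.ofReal ((1 + l1 x / lminf (centr x)) * u + C * u ^ 2) := by
  set q := l1 x / d / lminf (centr x) with hq
  have q_nonneg : 0 ≤ q := div_nonneg (div_nonneg (l1_nonneg x) d.cast_nonneg) (lminf_nonneg _)
  have d_mul_q : d * q = l1 x / lminf (centr x) := by
    rw [hq, ← mul_div_assoc, mul_div_cancel_of_imp']
    intro hd
    obtain rfl : d = 0 := by exact_mod_cast hd
    simp [l1]
  refine ⟨(d + 1) ^ 2 * q, 1 / (d + 1), by positivity, fun u hu hu0 r hr => ?_⟩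
  have hdu : (d + 1) * u ≤ 1 := by rwa [le_div_iff₀' (by positivity)] at hu0
  refine (hr.rhoV_centr_le hx).trans (ENNReal.ofReal_le_ofReal ?_)
  calc u + ((1 + u) ^ d - 1) * (1 + u) * q
      ≤ u + (d * u + (d + 1) ^ 2 * u ^ 2) * q := by
        gcongr
        exact one_add_pow_sub_one_mul_le hu.le hdu
    _ = (1 + l1 x / lminf (centr x)) * u + (d + 1) ^ 2 * q * u ^ 2 := by
        rw [← d_mul_q]; ring

end TR
end
end

section
/- Let x ∈ ℝ^d be nonzero. The floating-point evaluation of the RMS layer normalization R(x) = √d · x/‖x‖₂ satisfies, for all sufficiently small u: ρ_c( fl(R(x)), R(x) ) ≤ (d/2 + 3) u + C u² for a constant C depending only on d (in particular, R is evaluated in a forward-stable manner). -/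
open scoped BigOperators ENNReal

noncomputable section

namespace TR

/-! Relative errors compose exactly on a logarithmic scale: writing each rounding as a
factor `exp θ` with `|θ| ≤ η := -log (1 - u)`, errors add up under products and quotients, square
roots halve them, and sums of nonnegative terms do not amplify them. The squares and the recursive
summation cost at most `d * η`, which the square root turns into `d / 2 * η`; rounding the square
root, the product with `√d` and the quotient add `3 * η`. This gives the bound
`(1 - u) ^ (-(d / 2 + 3)) - 1` on the relative error, which is then expanded to second order. -/

/-- Olver's relative precision: `a` approximates `b` up to a factor `exp θ` with `|θ| ≤ ε`.
The factor, unlike `|log (a / b)| ≤ ε`, forces equal signs and lets `0` approximate only itself. -/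
def RelPrec (ε a b : ℝ) : Prop := ∃ θ : ℝ, |θ| ≤ ε ∧ a = b * Real.exp θ

namespace RelPrec

variable {ε ε' a a' b b' c : ℝ}

theorem nonneg (h : RelPrec ε a b) : 0 ≤ ε :=
  let ⟨_, hθ, _⟩ := h
  (abs_nonneg _).trans hθ

theorem refl (hε : 0 ≤ ε) (a : ℝ) : RelPrec ε a a :=
  ⟨0, by simpa using hε, by simp⟩

theorem mono (h : RelPrec ε a b) (hε : ε ≤ ε') : RelPrec ε' a b :=
  let ⟨θ, hθ, hab⟩ := h
  ⟨θ, hθ.trans hε, hab⟩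

theorem trans (hab : RelPrec ε a b) (hbc : RelPrec ε' b c) : RelPrec (ε + ε') a c := by
  obtain ⟨θ, hθ, rfl⟩ := hab
  obtain ⟨φ, hφ, rfl⟩ := hbc
  exact ⟨θ + φ, (abs_add_le θ φ).trans (add_le_add hθ hφ), by rw [Real.exp_add]; ring⟩

theorem div (h : RelPrec ε a b) (h' : RelPrec ε' a' b') :
    RelPrec (ε + ε') (a / a') (b / b') := by
  obtain ⟨θ, hθ, rfl⟩ := h
  obtain ⟨φ, hφ, rfl⟩ := h'
  exact ⟨θ - φ, (abs_sub θ φ).trans (add_le_add hθ hφ), by rw [Real.exp_sub, mul_div_mul_comm]⟩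

theorem sqrt (h : RelPrec ε a b) : RelPrec (ε / 2) √a √b := by
  obtain ⟨θ, hθ, rfl⟩ := h
  refine ⟨θ / 2, ?_, by rw [Real.sqrt_mul' b (Real.exp_pos θ).le, Real.exp_half]⟩
  rw [abs_div, abs_two]
  exact div_le_div_of_nonneg_right hθ zero_le_two

theorem iff_of_nonneg (hε : 0 ≤ ε) (hb : 0 ≤ b) :
    RelPrec ε a b ↔ b * Real.exp (-ε) ≤ a ∧ a ≤ b * Real.exp ε := by
  constructor
  · rintro ⟨θ, hθ, rfl⟩
    obtain ⟨hlower, hupper⟩ := abs_le.1 hθ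
    constructor <;> gcongr
  · rintro ⟨hlower, hupper⟩
    obtain rfl | hb := hb.eq_or_lt
    · obtain rfl : a = 0 := by linarith
      exact refl hε 0
    · have ha : 0 < a / b := div_pos ((mul_pos hb (Real.exp_pos _)).trans_le hlower) hb
      refine ⟨Real.log (a / b), abs_le.2 ⟨?_, ?_⟩, ?_⟩
      · rwa [Real.le_log_iff_exp_le ha, le_div_iff₀' hb]
      · rwa [Real.log_le_iff_le_exp ha, div_le_iff₀' hb]
      · rw [Real.exp_log ha, mul_div_cancel₀ _ hb.ne']

theorem add (h : RelPrec ε a b) (h' : RelPrec ε a' b') (hb : 0 ≤ b) (hb' : 0 ≤ b') :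
    RelPrec ε (a + a') (b + b') := by
  obtain ⟨hlower, hupper⟩ := (iff_of_nonneg h.nonneg hb).1 h
  obtain ⟨hlower', hupper'⟩ := (iff_of_nonneg h.nonneg hb').1 h'
  rw [iff_of_nonneg h.nonneg (add_nonneg hb hb'), add_mul, add_mul]
  exact ⟨add_le_add hlower hlower', add_le_add hupper hupper'⟩

theorem sum {ι : Type*} {s : Finset ι} {f g : ι → ℝ} (hε : 0 ≤ ε)
    (h : ∀ i ∈ s, RelPrec ε (f i) (g i)) (hg : ∀ i ∈ s, 0 ≤ g i) :
    RelPrec ε (∑ i ∈ s, f i) (∑ i ∈ s, g i) := by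
  induction s using Finset.cons_induction with
  | empty => exact refl hε 0
  | cons i s hi ih =>
    rw [Finset.forall_mem_cons] at h hg
    rw [Finset.sum_cons, Finset.sum_cons]
    exact h.1.add (ih h.2 hg.2) hg.1 (Finset.sum_nonneg hg.2)

theorem abs_sub_le (h : RelPrec ε a b) : |a - b| ≤ (Real.exp ε - 1) * |b| := by
  obtain ⟨θ, hθ, rfl⟩ := h
  obtain ⟨hlower, hupper⟩ := abs_le.1 hθ
  have hfactor : |Real.exp θ - 1| ≤ Real.exp ε - 1 :=
    abs_le.2 ⟨by linarith [Real.add_one_le_exp θ, Real.add_one_le_exp ε], by gcongr⟩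
  calc |b * Real.exp θ - b| = |Real.exp θ - 1| * |b| := by rw [← abs_mul]; congr 1; ring
    _ ≤ (Real.exp ε - 1) * |b| := by gcongr

end RelPrec

theorem rhoV_le_of_relPrec {d : ℕ} {ε : ℝ} {xh x : Fin d → ℝ}
    (h : ∀ i, RelPrec ε (xh i) (x i)) : rhoV xh x ≤ ENNReal.ofReal (Real.exp ε - 1) := by
  refine iSup_le fun i => ?_
  have habs := (h i).abs_sub_le
  split_ifs with hx hxh
  · exact zero_le
  · exact absurd (by simpa [hx] using habs) hxh
  · exact ENNReal.ofReal_le_ofReal ((div_le_iff₀ (abs_pos.2 hx)).2 habs)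

theorem abs_log_one_add_le {u δ : ℝ} (hδ : |δ| ≤ u) (hu : u < 1) :
    |Real.log (1 + δ)| ≤ -Real.log (1 - u) := by
  obtain ⟨hlower, hupper⟩ := abs_le.1 hδ
  have hsub : 0 < 1 - u := sub_pos.2 hu
  have hadd : 0 < 1 + δ := by linarith
  rw [abs_le, neg_neg, ← Real.log_inv]
  refine ⟨Real.log_le_log hsub (by linarith), Real.log_le_log hadd ?_⟩
  rw [← one_div, le_div_iff₀ hsub]
  nlinarith

section Rounding

variable {u : ℝ}

theorem Fp.relPrec {a b : ℝ} (h : Fp u a b) (hu : u < 1) :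
    RelPrec (-Real.log (1 - u)) a b := by
  obtain ⟨δ, hδ, rfl⟩ := h
  have hpos : 0 < 1 + δ := by linarith [neg_le_of_abs_le hδ]
  exact ⟨Real.log (1 + δ), abs_log_one_add_le hδ hu, by rw [Real.exp_log hpos]⟩

theorem FlSumL.relPrec {l : List ℝ} {s : ℝ} (h : FlSumL u l s) (hu : u < 1)
    (hl : ∀ y ∈ l, 0 ≤ y) :
    RelPrec ((l.length - 1 : ℕ) * -Real.log (1 - u)) s l.sum := by
  induction h with
  | nil => simpa using RelPrec.refl le_rfl 0
  | single x => simpa using RelPrec.refl le_rfl x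
  | cons x y l s r _ hr ih =>
    rw [List.forall_mem_cons] at hl
    have htail := ih hl.2
    have hexact : RelPrec _ (x + s) (x + (y :: l).sum) :=
      (RelPrec.refl htail.nonneg x).add htail hl.1 (List.sum_nonneg hl.2)
    rw [List.sum_cons]
    refine ((hr.relPrec hu).trans hexact).mono (le_of_eq ?_)
    simp only [List.length_cons, Nat.add_sub_cancel]
    push_cast
    ring

theorem FlSum.relPrec {m : ℕ} {f : Fin m → ℝ} {s : ℝ} (h : FlSum u f s) (hu : u < 1)
    (hf : ∀ i, 0 ≤ f i) : RelPrec ((m - 1 : ℕ) * -Real.log (1 - u)) s (∑ i, f i) := by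
  simpa only [List.length_ofFn, List.sum_ofFn] using
    FlSumL.relPrec h hu (List.forall_mem_ofFn_iff.2 hf)

variable {d : ℕ} {x : Fin d → ℝ}

theorem FlL2.relPrec [NeZero d] {n : ℝ} (h : FlL2 u x n) (hu : u < 1) :
    RelPrec (((d : ℝ) / 2 + 1) * -Real.log (1 - u)) n (l2 x) := by
  obtain ⟨p, hp, s, hs, hn⟩ := h
  have hround : RelPrec (-Real.log (1 - u)) n √s := hn.relPrec hu
  have hsquares : ∀ i, RelPrec (-Real.log (1 - u)) (p i) (x i ^ 2) := fun i => by
    simpa only [pow_two] using (hp i).relPrec hu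
  have hp_nonneg : ∀ i, 0 ≤ p i := fun i => by
    obtain ⟨θ, -, hθ⟩ := hsquares i
    rw [hθ]
    positivity
  have hsum : RelPrec (-Real.log (1 - u)) (∑ i, p i) (∑ i, x i ^ 2) :=
    RelPrec.sum hround.nonneg (fun i _ => hsquares i) fun i _ => sq_nonneg (x i)
  refine (hround.trans ((hs.relPrec hu hp_nonneg).trans hsum).sqrt).mono (le_of_eq ?_)
  rw [Nat.cast_pred (NeZero.pos d)]
  ring

theorem FlRMS.relPrec {r : Fin d → ℝ} (h : FlRMS u x r) (hu : u < 1) (i : Fin d) :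
    RelPrec (((d : ℝ) / 2 + 3) * -Real.log (1 - u)) (r i) (rmsN x i) := by
  have : NeZero d := .of_pos i.pos
  obtain ⟨n, hn, hr⟩ := h
  obtain ⟨t, ht, hri⟩ := hr i
  exact ((hri.relPrec hu).trans ((ht.relPrec hu).div (hn.relPrec hu))).mono (le_of_eq (by ring))

theorem FlRMS.rhoV_le {r : Fin d → ℝ} (h : FlRMS u x r) (hu : u < 1) :
    rhoV r (rmsN x) ≤ ENNReal.ofReal ((1 - u) ^ (-((d : ℝ) / 2 + 3)) - 1) := by
  rw [Real.rpow_def_of_pos (sub_pos.2 hu), mul_neg, ← neg_mul, mul_comm]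
  exact rhoV_le_of_relPrec (h.relPrec hu)

end Rounding

theorem one_sub_rpow_neg_sub_one_le {k u : ℝ} (hk : 0 ≤ k) (hu : 0 ≤ u) (hu2 : u ≤ 1 / 2)
    (hku : k * u ≤ 1 / 2) :
    (1 - u) ^ (-k) - 1 ≤ k * u + (2 * k + 4 * k ^ 2) * u ^ 2 := by
  have hpos : 0 < 1 - u := by linarith
  set ε := -(k * Real.log (1 - u)) with hε
  have hε0 : 0 ≤ ε :=
    neg_nonneg.2 (mul_nonpos_of_nonneg_of_nonpos hk (Real.log_nonpos hpos.le (by linarith)))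
  have hlog : -Real.log (1 - u) ≤ u + 2 * u ^ 2 := by
    have hinv : (1 - u)⁻¹ ≤ 1 + u + 2 * u ^ 2 := by
      rw [inv_le_iff_one_le_mul₀ hpos]
      nlinarith [mul_nonneg (sq_nonneg u) (sub_nonneg.2 hu2)]
    linarith [Real.one_sub_inv_le_log_of_pos hpos]
  have hfirst : ε ≤ k * u + 2 * k * u ^ 2 := by
    linarith [mul_le_mul_of_nonneg_left hlog hk]
  have hcoarse : ε ≤ 2 * k * u := by
    nlinarith [mul_nonneg (mul_nonneg hk hu) (sub_nonneg.2 hu2)]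
  calc (1 - u) ^ (-k) - 1 = Real.exp ε - 1 := by
        rw [Real.rpow_def_of_pos hpos, hε, mul_neg, mul_comm k]
    _ ≤ ε + ε ^ 2 := by
        have hε1 : |ε| ≤ 1 := by rw [abs_of_nonneg hε0]; linarith
        linarith [le_of_abs_le (Real.abs_exp_sub_one_sub_id_le hε1)]
    _ ≤ (k * u + 2 * k * u ^ 2) + (2 * k * u) ^ 2 := by gcongr
    _ = k * u + (2 * k + 4 * k ^ 2) * u ^ 2 := by ring

/-- RMS layer normalization is evaluated in a forward-stable manner:
for every nonzero `x` and all sufficiently small `u`,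
`ρ_c(fl(R(x)), R(x)) ≤ (d/2 + 3)u + C u²` with `C` depending only on `d`. -/
theorem rms_normalization_rounding (d : ℕ) :
    ∃ C u0 : ℝ, 0 < u0 ∧ ∀ x : Fin d → ℝ, x ≠ 0 → ∀ u : ℝ, 0 < u → u ≤ u0 →
      ∀ r : Fin d → ℝ, FlRMS u x r →
        rhoV r (rmsN x) ≤ ENNReal.ofReal (((d : ℝ) / 2 + 3) * u + C * u ^ 2) := by
  set k : ℝ := (d : ℝ) / 2 + 3
  have hk : 3 ≤ k := le_add_of_nonneg_left (by positivity)
  refine ⟨2 * k + 4 * k ^ 2, 1 / (2 * k), by positivity, fun x _ u hu hu0 r hr => ?_⟩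
  have hku : k * u ≤ 1 / 2 := by
    rw [le_div_iff₀ (by positivity)] at hu0
    linarith
  have hu2 : u ≤ 1 / 2 := by nlinarith
  exact (hr.rhoV_le (by linarith)).trans <| ENNReal.ofReal_le_ofReal <|
    one_sub_rpow_neg_sub_one_le (by positivity) hu.le hu2 hku

end TR
end
end
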